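/- arXiv:1904.07674 — 2 statements merged into one kernel-verified Lean document; each statement's English description precedes it below -/
import Mathlib

section
/- For all integers n, k, i, j with 1 ≤ k ≤ n, 0 ≤ i ≤ k−1 and 0 ≤ j ≤ n−k, the number of ordered partitions π = (L_1,…,L_k) of [n] = {1,…,n} into k nonempty lists such that nsb(π) = i and nse(π) = j equals c(n, n−j) · S(n−j, k) · c(k, k−i), where c denotes the unsigned Stirling number of the first kind and S denotes the Stirling number of the second kind. -/
open Finset

/-- The number of cycles (including fixed points) of a permutation of `Fin n`. -/
noncomputable def cycleCount {n : ℕ} (σ : Equiv.Perm (Fin n)) : ℕ :=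
  σ.cycleType.card + (Finset.univ.filter fun x => σ x = x).card

/-- The unsigned Stirling number of the first kind `c(n,k)`: the number of
permutations of an `n`-element set with exactly `k` cycles. -/
noncomputable def stirlingFirst (n k : ℕ) : ℕ :=
  Set.ncard {σ : Equiv.Perm (Fin n) | cycleCount σ = k}

/-- The signed Stirling number of the first kind `s(n,k) = (-1)^(n-k) c(n,k)`. -/
noncomputable def stirlingFirstSigned (n k : ℕ) : ℤ :=
  (-1) ^ (n - k) * (stirlingFirst n k : ℤ)

/-- `P` is an (unordered) partition of `Fin n` into nonempty blocks. -/
def IsPartitionOf (n : ℕ) (P : Finset (Finset (Fin n))) : Prop :=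
  (∀ b ∈ P, b.Nonempty) ∧ (∀ b ∈ P, ∀ c ∈ P, b ≠ c → Disjoint b c) ∧
    ∀ x : Fin n, ∃ b ∈ P, x ∈ b

/-- The Stirling number of the second kind `S(n,k)`: the number of partitions of an
`n`-element set into exactly `k` nonempty blocks. -/
noncomputable def stirlingSecond (n k : ℕ) : ℕ :=
  Set.ncard {P : Finset (Finset (Fin n)) | IsPartitionOf n P ∧ P.card = k}

/-- The Bell number `B n`: the number of partitions of an `n`-element set into
nonempty blocks. -/
noncomputable def bell (n : ℕ) : ℕ :=
  Set.ncard {P : Finset (Finset (Fin n)) | IsPartitionOf n P}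

/-- The statistic `nse` of a list: the number of positions `j` such that some later
entry is smaller than the entry at position `j`. -/
def nseList {α : Type*} [LinearOrder α] : List α → ℕ
  | [] => 0
  | a :: w => (if ∃ b ∈ w, b < a then 1 else 0) + nseList w

/-- `B` is an ordered set partition ("list of sets") of `Fin n` into `k` pairwise
disjoint nonempty blocks. -/
def IsOrderedSetPartition (n k : ℕ) (B : Fin k → Finset (Fin n)) : Prop :=
  (∀ j, (B j).Nonempty) ∧ (∀ j l, j ≠ l → Disjoint (B j) (B l)) ∧
    ∀ x : Fin n, ∃ j, x ∈ B j

/-- The statistic `nsb` of an ordered set partition: the number of indices `j`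
such that `min (B j) > min (B l)` for some `l > j`. -/
def nsbOSP {n k : ℕ} (B : Fin k → Finset (Fin n)) : ℕ :=
  (Finset.univ.filter fun j : Fin k => ∃ l, j < l ∧ (B l).min < (B j).min).card

/-- `P` is a "set of lists" partition of `Fin n`: an unordered collection of nonempty
sequences of distinct elements, with pairwise disjoint underlying sets covering `Fin n`. -/
def IsSetOfLists (n : ℕ) (P : Finset (List (Fin n))) : Prop :=
  (∀ w ∈ P, w ≠ []) ∧ (∀ w ∈ P, w.Nodup) ∧
    (∀ w ∈ P, ∀ u ∈ P, w ≠ u → ∀ x ∈ w, x ∉ u) ∧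
    ∀ x : Fin n, ∃ w ∈ P, x ∈ w

/-- The statistic `nse` of a set of lists: the sum of `nseList` over its blocks. -/
def nseSL {n : ℕ} (P : Finset (List (Fin n))) : ℕ := ∑ w ∈ P, nseList w

/-- `L` is a "list of lists" partition of `Fin n` into `k` blocks: a sequence of `k`
nonempty sequences of distinct elements, with pairwise disjoint underlying sets
covering `Fin n`. -/
def IsListOfLists (n k : ℕ) (L : Fin k → List (Fin n)) : Prop :=
  (∀ j, L j ≠ []) ∧ (∀ j, (L j).Nodup) ∧
    (∀ j l, j ≠ l → ∀ x ∈ L j, x ∉ L l) ∧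
    ∀ x : Fin n, ∃ j, x ∈ L j

/-- The statistic `nse` of a list of lists: the sum of `nseList` over its blocks. -/
def nseLL {n k : ℕ} (L : Fin k → List (Fin n)) : ℕ := ∑ j, nseList (L j)

/-- The statistic `nsb` of a list of lists: the number of indices `j` such that
`min (L j) > min (L l)` for some `l > j`. -/
def nsbLL {n k : ℕ} (L : Fin k → List (Fin n)) : ℕ :=
  (Finset.univ.filter fun j : Fin k => ∃ l, j < l ∧ (L l).minimum < (L j).minimum).card

/-!
Remove the largest element `a` from a list of lists. It stood immediately before another element,
or at the end of a list with other entries, or it formed a list by itself. Putting it back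
before a given element raises `nse` by one and keeps `nsb`; putting it at the end of an existing
list keeps both; as a list of its own it keeps `nse` and raises `nsb` by one, unless that list
comes last. For lists of lists of an `n`-element set with `k` blocks, `nsb = k - r` and
`nse = n - m`, this gives the recurrence
`N (n+1, k+1, m+1, r+1) = n N (n, k+1, m+1, r+1) + (k+1) N (n, k+1, m, r+1) + k N (n, k, m, r+1)
+ N (n, k, m, r)`,
which `c (n, m) * S (m, k) * c (k, r)` satisfies by the three Stirling recurrences.
-/

section Permutations

open Equiv Equiv.Perm

variable {α : Type*} [Fintype α] [DecidableEq α]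

lemma card_parts_partition_add_card_support (σ : Perm α) :
    σ.partition.parts.card + #σ.support = σ.cycleType.card + Fintype.card α := by
  have := σ.support.card_le_univ
  simp only [parts_partition, Multiset.card_add, Multiset.card_replicate]
  omega

lemma card_cycleType_swap_mul_of_isCycle {f : Perm α} (hf : f.IsCycle) {x : α} (hx : f x ≠ x) :
    (swap x (f x) * f).cycleType.card + #f.support = #(swap x (f x) * f).support + 2 := by
  by_cases h : f (f x) = x
  · rw [hf.eq_swap_of_apply_apply_eq_self hx h]
    simp [card_support_swap hx.symm]
  · have hsupp : x ∈ f.support := mem_support.2 hx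
    rw [card_cycleType_eq_one.2 (hf.swap_mul hx h), support_swap_mul_eq f x h,
      ← erase_eq, ← card_erase_add_one hsupp]
    ring

lemma card_parts_partition_swap_mul {σ : Perm α} {x : α} (hx : σ x ≠ x) :
    (swap x (σ x) * σ).partition.parts.card = σ.partition.parts.card + 1 := by
  set f := σ.cycleOf x
  set g := σ * f⁻¹
  have hf : f.IsCycle := isCycle_cycleOf σ hx
  have hfx : f x = σ x := cycleOf_apply_self σ x
  have hfg : Perm.Disjoint f g :=
    (disjoint_mul_inv_of_mem_cycleFactorsFinset
      (cycleOf_mem_cycleFactorsFinset_iff.2 (mem_support.2 hx))).symm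
  have hσ : σ = f * g := by simp [hfg.commute.eq, g]
  set h := swap x (f x) * f
  have hhg : Perm.Disjoint h g := hfg.mono
    (fun y hy => (mem_support_swap_mul_imp_mem_support_ne hy).1) le_rfl
  have hswap : swap x (σ x) * σ = h * g := by rw [← hfx, mul_assoc, ← hσ]
  have hcycle : h.cycleType.card + #f.support = #h.support + 2 :=
    card_cycleType_swap_mul_of_isCycle hf (hfx.trans_ne hx)
  have hσ_count := card_parts_partition_add_card_support σ
  have hswap_count := card_parts_partition_add_card_support (h * g)
  rw [hσ, hfg.cycleType_mul, hfg.card_support_mul, Multiset.card_add,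
    card_cycleType_eq_one.2 hf, ← hσ] at hσ_count
  rw [hhg.cycleType_mul, hhg.card_support_mul, Multiset.card_add, ← hswap] at hswap_count
  omega

lemma cycleCount_eq_card_parts_partition {n : ℕ} (σ : Perm (Fin n)) :
    cycleCount σ = σ.partition.parts.card := by
  have hfixed : (univ.filter fun x => σ x = x) = σ.supportᶜ := by ext x; simp
  simp [cycleCount, parts_partition, hfixed, card_compl]

lemma decomposeFin_symm_zero_eq_extendDomain {n : ℕ} (e : Perm (Fin n)) :
    decomposeFin.symm (0, e) = e.extendDomain (finSuccAboveEquiv (0 : Fin (n + 1))) := by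
  ext x
  cases x using Fin.cases with
  | zero => rw [extendDomain_apply_not_subtype] <;> simp
  | succ y =>
    have := extendDomain_apply_image e (finSuccAboveEquiv (0 : Fin (n + 1))) y
    simp_all [finSuccAboveEquiv_apply]

lemma cycleCount_decomposeFin_symm {n : ℕ} (p : Fin (n + 1)) (e : Perm (Fin n)) :
    cycleCount (decomposeFin.symm (p, e)) = cycleCount e + if p = 0 then 1 else 0 := by
  have hzero : cycleCount (decomposeFin.symm (0, e)) = cycleCount e + 1 := by
    have he := card_parts_partition_add_card_support e
    have he' := card_parts_partition_add_card_support (decomposeFin.symm (0, e))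
    rw [decomposeFin_symm_zero_eq_extendDomain, cycleType_extendDomain,
      card_support_extend_domain, ← decomposeFin_symm_zero_eq_extendDomain] at he'
    simp only [cycleCount_eq_card_parts_partition, Fintype.card_fin] at *
    omega
  split_ifs with hp
  · rw [hp, hzero]
  · have happly : decomposeFin.symm (p, e) 0 = p := decomposeFin_symm_apply_zero p e
    have hswap : swap 0 p * decomposeFin.symm (p, e) = decomposeFin.symm (0, e) := by
      ext x
      cases x using Fin.cases <;> simp
    have := card_parts_partition_swap_mul (happly.trans_ne hp)
    rw [happly, hswap] at this
    simp only [cycleCount_eq_card_parts_partition] at hzero ⊢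
    omega

lemma stirlingFirst_zero_left (k : ℕ) : stirlingFirst 0 k = Nat.stirlingFirst 0 k := by
  have hcount (σ : Perm (Fin 0)) : cycleCount σ = 0 := by
    simp [Subsingleton.elim σ 1, cycleCount]
  cases k <;> simp [stirlingFirst, hcount]

lemma stirlingFirst_succ_left (n k : ℕ) :
    stirlingFirst (n + 1) k =
      n * stirlingFirst n k + Set.ncard {e : Perm (Fin n) | cycleCount e + 1 = k} := by
  have hsplit : decomposeFin.symm ⁻¹' {σ : Perm (Fin (n + 1)) | cycleCount σ = k} =
      ({0}ᶜ ×ˢ {e | cycleCount e = k}) ∪ ({0} ×ˢ {e | cycleCount e + 1 = k}) := by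
    ext ⟨p, e⟩
    by_cases hp : p = 0 <;> simp [hp, cycleCount_decomposeFin_symm]
  have hdisj : Disjoint (({0}ᶜ : Set (Fin (n + 1))) ×ˢ {e : Perm (Fin n) | cycleCount e = k})
      ({0} ×ˢ {e | cycleCount e + 1 = k}) :=
    Set.disjoint_prod.2 (.inl disjoint_compl_left)
  rw [stirlingFirst, ← Equiv.image_preimage decomposeFin.symm {σ | cycleCount σ = k},
    Set.ncard_image_of_injective _ decomposeFin.symm.injective, hsplit, Set.ncard_union_eq hdisj,
    Set.ncard_prod, Set.ncard_prod, Set.ncard_compl]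
  simp [stirlingFirst]

theorem stirlingFirst_eq_natStirlingFirst (n k : ℕ) :
    stirlingFirst n k = Nat.stirlingFirst n k := by
  induction n generalizing k with
  | zero => exact stirlingFirst_zero_left k
  | succ n ih =>
    rw [stirlingFirst_succ_left, ih]
    cases k with
    | zero => cases n <;> simp
    | succ k => simp [Nat.stirlingFirst_succ_succ, ← ih k, stirlingFirst]

end Permutations

section SetPartitions

variable {α : Type*}

lemma sum_eq_val_iff {ι : Type*} (T : Finset ι) (f : ι → Multiset α) (s : Finset α) :
    ∑ i ∈ T, f i = s.val ↔ (∀ i ∈ T, (f i).Nodup) ∧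
      (∀ i ∈ T, ∀ j ∈ T, i ≠ j → Disjoint (f i) (f j)) ∧ ∀ x, x ∈ s ↔ ∃ i ∈ T, x ∈ f i := by
  have hsum : ∑ i ∈ T, f i = T.val.bind f := rfl
  have hpairwise : T.val.Pairwise (Function.onFun Disjoint f) ↔
      ∀ i ∈ T, ∀ j ∈ T, i ≠ j → Disjoint (f i) (f j) :=
    ⟨fun h i hi j hj hij => h.forall hi hj hij, fun h => Multiset.Nodup.pairwise h T.nodup⟩
  have hnodup : (∑ i ∈ T, f i).Nodup ↔ (∀ i ∈ T, (f i).Nodup) ∧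
      ∀ i ∈ T, ∀ j ∈ T, i ≠ j → Disjoint (f i) (f j) := by
    rw [hsum, Multiset.nodup_bind, hpairwise]; rfl
  have hmem (x : α) : x ∈ ∑ i ∈ T, f i ↔ ∃ i ∈ T, x ∈ f i := by
    rw [hsum, Multiset.mem_bind]; rfl
  rw [← and_assoc, ← hnodup]
  simp only [← hmem]
  refine ⟨fun h => ⟨h ▸ s.nodup, fun x => by rw [h, mem_val]⟩, fun ⟨hn, hx⟩ => ?_⟩
  exact (Multiset.Nodup.ext hn s.nodup).2 fun x => (hx x).symm

variable [DecidableEq α]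

/-- The partitions of `s` into `k` nonempty blocks. Adding up the blocks as multisets expresses
in one equation that they are disjoint and that they cover `s`. -/
def setPartitions (s : Finset α) (k : ℕ) : Finset (Finset (Finset α)) :=
  {P ∈ s.powerset.powerset | ∅ ∉ P ∧ ∑ B ∈ P, B.val = s.val ∧ #P = k}

variable {s : Finset α} {P : Finset (Finset α)} {k : ℕ} {a : α}

lemma mem_setPartitions :
    P ∈ setPartitions s k ↔ ∅ ∉ P ∧ ∑ B ∈ P, B.val = s.val ∧ #P = k := by
  simp only [setPartitions, mem_filter, mem_powerset, and_iff_right_iff_imp]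
  rintro ⟨-, hsum, -⟩ B hB
  exact mem_powerset.2 (val_le_iff.1 (hsum ▸ single_le_sum_of_canonicallyOrdered hB))

lemma exists_mem_of_mem_setPartitions (hP : P ∈ setPartitions s k) {x : α} (hx : x ∈ s) :
    ∃ B ∈ P, x ∈ B :=
  (((sum_eq_val_iff _ _ _).1 (mem_setPartitions.1 hP).2.1).2.2 x).1 hx

lemma subset_of_mem_setPartitions (hP : P ∈ setPartitions s k) {B : Finset α} (hB : B ∈ P) :
    B ⊆ s :=
  fun x hx => (((sum_eq_val_iff _ _ _).1 (mem_setPartitions.1 hP).2.1).2.2 x).2 ⟨B, hB, hx⟩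

lemma eq_of_mem_setPartitions (hP : P ∈ setPartitions s k) {B C : Finset α} (hB : B ∈ P)
    (hC : C ∈ P) {x : α} (hxB : x ∈ B) (hxC : x ∈ C) : B = C := by
  by_contra hne
  exact disjoint_left.1 (disjoint_val.1
    (((sum_eq_val_iff _ _ _).1 (mem_setPartitions.1 hP).2.1).2.1 B hB C hC hne)) hxB hxC

lemma insert_singleton_mem_setPartitions (ha : a ∉ s) (hP : P ∈ setPartitions s k) :
    insert {a} P ∈ setPartitions (insert a s) (k + 1) := by
  have hnew : {a} ∉ P := fun h => ha (subset_of_mem_setPartitions hP h (mem_singleton_self a))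
  obtain ⟨hempty, hsum, hcard⟩ := mem_setPartitions.1 hP
  refine mem_setPartitions.2 ⟨?_, ?_, ?_⟩
  · simpa [eq_comm] using hempty
  · rw [sum_insert hnew, hsum, insert_val_of_notMem ha, singleton_val, Multiset.singleton_add]
  · rw [card_insert_of_notMem hnew, hcard]

lemma erase_singleton_mem_setPartitions (ha : a ∉ s)
    (hP : P ∈ setPartitions (insert a s) (k + 1)) (haP : {a} ∈ P) :
    P.erase {a} ∈ setPartitions s k := by
  obtain ⟨hempty, hsum, hcard⟩ := mem_setPartitions.1 hP
  refine mem_setPartitions.2 ⟨fun h => hempty (mem_of_mem_erase h), ?_, ?_⟩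
  · rwa [← add_sum_erase P _ haP, singleton_val, insert_val_of_notMem ha,
      Multiset.singleton_add, Multiset.cons_inj_right] at hsum
  · rw [card_erase_of_mem haP, hcard, Nat.add_sub_cancel]

/-- The set partition obtained from `P` by putting the new element `a` into the block `B`. -/
def adjoinToBlock (a : α) (P : Finset (Finset α)) (B : Finset α) : Finset (Finset α) :=
  insert (insert a B) (P.erase B)

lemma adjoinToBlock_mem_setPartitions (ha : a ∉ s) (hP : P ∈ setPartitions s k)
    {B : Finset α} (hB : B ∈ P) : adjoinToBlock a P B ∈ setPartitions (insert a s) k := by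
  have hnew : insert a B ∉ P.erase B := fun h =>
    ha (subset_of_mem_setPartitions hP (mem_of_mem_erase h) (mem_insert_self a B))
  have haB : a ∉ B := fun h => ha (subset_of_mem_setPartitions hP hB h)
  obtain ⟨hempty, hsum, hcard⟩ := mem_setPartitions.1 hP
  refine mem_setPartitions.2 ⟨?_, ?_, ?_⟩
  · simp [adjoinToBlock, hempty, (insert_ne_empty a B).symm]
  · rw [adjoinToBlock, sum_insert hnew, insert_val_of_notMem haB, insert_val_of_notMem ha,
      Multiset.cons_add, add_sum_erase P _ hB, hsum]
  · rw [adjoinToBlock, card_insert_of_notMem hnew, card_erase_add_one hB, hcard]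

lemma exists_adjoinToBlock_eq (ha : a ∉ s) (hP : P ∈ setPartitions (insert a s) k)
    (haP : {a} ∉ P) : ∃ Q ∈ setPartitions s k, ∃ B ∈ Q, adjoinToBlock a Q B = P := by
  obtain ⟨C, hC, haC⟩ := exists_mem_of_mem_setPartitions hP (mem_insert_self a s)
  have hne : C.erase a ≠ ∅ := by
    rw [Ne, erase_eq_empty_iff]
    rintro (rfl | rfl)
    exacts [notMem_empty a haC, haP hC]
  have hnew : C.erase a ∉ P.erase C := fun h => by
    obtain ⟨x, hx⟩ := nonempty_iff_ne_empty.2 hne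
    exact ne_of_mem_erase h
      (eq_of_mem_setPartitions hP (mem_of_mem_erase h) hC hx (mem_of_mem_erase hx))
  obtain ⟨hempty, hsum, hcard⟩ := mem_setPartitions.1 hP
  refine ⟨insert (C.erase a) (P.erase C), mem_setPartitions.2 ⟨?_, ?_, ?_⟩, C.erase a,
    mem_insert_self _ _, ?_⟩
  · simp [hne.symm, hempty]
  · rwa [← add_sum_erase P _ hC, ← insert_erase haC, insert_val_of_notMem (notMem_erase a C),
      insert_erase haC, insert_val_of_notMem ha, Multiset.cons_add, Multiset.cons_inj_right,
      ← sum_insert hnew] at hsum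
  · rw [card_insert_of_notMem hnew, card_erase_add_one hC, hcard]
  · rw [adjoinToBlock, erase_insert hnew, insert_erase haC, insert_erase hC]

lemma adjoinToBlock_injective_of_mem (ha : a ∉ s) {Q : Finset (Finset α)} {B C : Finset α}
    (hP : P ∈ setPartitions s k) (hQ : Q ∈ setPartitions s k) (hB : B ∈ P) (hC : C ∈ Q)
    (h : adjoinToBlock a P B = adjoinToBlock a Q C) : P = Q ∧ B = C := by
  have haB : a ∉ B := fun h => ha (subset_of_mem_setPartitions hP hB h)
  have haC : a ∉ C := fun h => ha (subset_of_mem_setPartitions hQ hC h)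
  have hblock : insert a B = insert a C :=
    eq_of_mem_setPartitions (adjoinToBlock_mem_setPartitions ha hP hB) (mem_insert_self _ _)
      (h ▸ mem_insert_self _ _) (mem_insert_self a B) (mem_insert_self a C)
  have hBC : B = C := by rw [← erase_insert haB, hblock, erase_insert haC]
  subst hBC
  have hrest {R : Finset (Finset α)} (hR : R ∈ setPartitions s k) : insert a B ∉ R.erase B :=
    fun h => ha (subset_of_mem_setPartitions hR (mem_of_mem_erase h) (mem_insert_self a B))
  have herase : P.erase B = Q.erase B := by
    rw [← erase_insert (hrest hP), ← erase_insert (hrest hQ)]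
    exact congrArg (erase · (insert a B)) h
  exact ⟨by rw [← insert_erase hB, herase, insert_erase hC], rfl⟩

lemma singleton_notMem_adjoinToBlock (ha : a ∉ s) (hP : P ∈ setPartitions s k) {B : Finset α}
    (hB : B ∈ P) : {a} ∉ adjoinToBlock a P B := by
  obtain ⟨x, hx⟩ : B.Nonempty :=
    nonempty_of_ne_empty (ne_of_mem_of_not_mem hB (mem_setPartitions.1 hP).1)
  intro h
  rcases mem_insert.1 h with h | h
  · have hxa : x = a := mem_singleton.1 (h ▸ mem_insert_of_mem hx)
    exact ha (subset_of_mem_setPartitions hP hB (hxa ▸ hx))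
  · exact ha (subset_of_mem_setPartitions hP (mem_of_mem_erase h) (mem_singleton_self a))

lemma card_setPartitions_insert_filter_mem (ha : a ∉ s) (k : ℕ) :
    #{P ∈ setPartitions (insert a s) (k + 1) | {a} ∈ P} = #(setPartitions s k) := by
  refine card_nbij' (erase · {a}) (insert {a}) ?_ ?_ ?_ ?_
  · intro P hP
    obtain ⟨hP, haP⟩ := mem_filter.1 hP
    exact erase_singleton_mem_setPartitions ha hP haP
  · intro P hP
    exact mem_filter.2 ⟨insert_singleton_mem_setPartitions ha hP, mem_insert_self _ _⟩
  · intro P hP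
    exact insert_erase (mem_filter.1 hP).2
  · intro P hP
    exact erase_insert fun h => ha (subset_of_mem_setPartitions hP h (mem_singleton_self a))

lemma card_setPartitions_insert_filter_notMem (ha : a ∉ s) (k : ℕ) :
    #{P ∈ setPartitions (insert a s) k | {a} ∉ P} = k * #(setPartitions s k) := by
  suffices #((setPartitions s k).sigma fun P => P) =
      #{P ∈ setPartitions (insert a s) k | {a} ∉ P} by
    rw [← this, card_sigma, sum_const_nat fun P hP => (mem_setPartitions.1 hP).2.2, mul_comm]
  refine card_nbij (fun p => adjoinToBlock a p.1 p.2) ?_ ?_ ?_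
  · rintro ⟨P, B⟩ hPB
    obtain ⟨hP, hB⟩ := mem_sigma.1 hPB
    exact mem_filter.2
      ⟨adjoinToBlock_mem_setPartitions ha hP hB, singleton_notMem_adjoinToBlock ha hP hB⟩
  · rintro ⟨P, B⟩ hPB ⟨Q, C⟩ hQC h
    obtain ⟨hP, hB⟩ := mem_sigma.1 hPB
    obtain ⟨hQ, hC⟩ := mem_sigma.1 hQC
    obtain ⟨rfl, rfl⟩ := adjoinToBlock_injective_of_mem ha hP hQ hB hC h
    rfl
  · intro P hP
    obtain ⟨hP, haP⟩ := mem_filter.1 hP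
    obtain ⟨Q, hQ, B, hB, rfl⟩ := exists_adjoinToBlock_eq ha hP haP
    exact ⟨⟨Q, B⟩, mem_sigma.2 ⟨hQ, hB⟩, rfl⟩

lemma card_setPartitions_insert (ha : a ∉ s) (k : ℕ) :
    #(setPartitions (insert a s) (k + 1)) =
      (k + 1) * #(setPartitions s (k + 1)) + #(setPartitions s k) := by
  rw [← card_filter_add_card_filter_not (p := ({a} ∈ ·)),
    card_setPartitions_insert_filter_mem ha, card_setPartitions_insert_filter_notMem ha, add_comm]

lemma setPartitions_empty_succ (k : ℕ) : setPartitions (∅ : Finset α) (k + 1) = ∅ := by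
  refine eq_empty_of_forall_notMem fun P hP => ?_
  obtain ⟨hempty, -, hcard⟩ := mem_setPartitions.1 hP
  obtain ⟨B, hB⟩ := card_pos.1 (k.succ_pos.trans_eq hcard.symm)
  exact hempty (subset_empty.1 (subset_of_mem_setPartitions hP hB) ▸ hB)

lemma setPartitions_zero_right (s : Finset α) :
    setPartitions s 0 = if s = ∅ then {∅} else ∅ := by
  ext P
  by_cases hs : s = ∅ <;> by_cases hP : P = ∅ <;>
    simp [mem_setPartitions, hs, hP, eq_comm (b := s.val)]

theorem card_setPartitions (s : Finset α) (k : ℕ) :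
    #(setPartitions s k) = Nat.stirlingSecond #s k := by
  induction s using Finset.induction_on generalizing k with
  | empty => cases k <;> simp [setPartitions_zero_right, setPartitions_empty_succ]
  | insert a s ha ih =>
    rw [card_insert_of_notMem ha]
    cases k with
    | zero => simp [setPartitions_zero_right]
    | succ k => rw [card_setPartitions_insert ha, ih, ih, Nat.stirlingSecond_succ_succ]

lemma isPartitionOf_iff_mem_setPartitions {n : ℕ} {P : Finset (Finset (Fin n))} :
    IsPartitionOf n P ↔ P ∈ setPartitions univ #P := by
  simp only [IsPartitionOf, mem_setPartitions, sum_eq_val_iff, disjoint_val, mem_univ, mem_val,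
    true_iff, and_true, nodup, implies_true, true_and, nonempty_iff_ne_empty]
  exact and_congr_left' ⟨fun h hP => h ∅ hP rfl, fun h B hB => ne_of_mem_of_not_mem hB h⟩

theorem stirlingSecond_eq_natStirlingSecond (n k : ℕ) :
    stirlingSecond n k = Nat.stirlingSecond n k := by
  have hset : {P : Finset (Finset (Fin n)) | IsPartitionOf n P ∧ #P = k} =
      (setPartitions univ k : Finset (Finset (Finset (Fin n)))) := by
    ext P
    simp only [Set.mem_ofPred_eq, mem_coe, isPartitionOf_iff_mem_setPartitions]
    exact ⟨fun h => h.2 ▸ h.1, fun h => have hcard := (mem_setPartitions.1 h).2.2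
      ⟨hcard.symm ▸ h, hcard⟩⟩
  rw [stirlingSecond, hset, Set.ncard_coe_finset, card_setPartitions, card_fin]

end SetPartitions

section ListInsertion

variable {α : Type*} [DecidableEq α] {a x : α} {u v w : List α}

/-- The list obtained from `w` by putting `a` immediately before every occurrence of `x`. -/
def insertBefore (a x : α) (w : List α) : List α :=
  w.flatMap fun z => if z = x then [a, z] else [z]

lemma insertBefore_cons (a x z : α) (w : List α) :
    insertBefore a x (z :: w) = (if z = x then [a, z] else [z]) ++ insertBefore a x w :=
  List.flatMap_cons

lemma insertBefore_append (a x : α) (u v : List α) :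
    insertBefore a x (u ++ v) = insertBefore a x u ++ insertBefore a x v :=
  List.flatMap_append

lemma insertBefore_of_notMem (a : α) (hx : x ∉ w) : insertBefore a x w = w := by
  induction w with
  | nil => rfl
  | cons z w ih =>
    rw [List.mem_cons, not_or] at hx
    rw [insertBefore_cons, if_neg (Ne.symm hx.1), ih hx.2, List.singleton_append]

lemma insertBefore_append_cons (a : α) (hu : x ∉ u) (hv : x ∉ v) :
    insertBefore a x (u ++ x :: v) = u ++ a :: x :: v := by
  rw [insertBefore_append, insertBefore_cons, if_pos rfl, insertBefore_of_notMem a hu,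
    insertBefore_of_notMem a hv]
  rfl

lemma filter_ne_insertBefore (x : α) (ha : a ∉ w) :
    (insertBefore a x w).filter (· ≠ a) = w := by
  induction w with
  | nil => rfl
  | cons z w ih =>
    rw [List.mem_cons, not_or] at ha
    rw [insertBefore_cons, List.filter_append, ih ha.2]
    split_ifs <;> simp [Ne.symm ha.1]

lemma getLast?_insertBefore (a x : α) (w : List α) :
    (insertBefore a x w).getLast? = w.getLast? := by
  induction w using List.reverseRecOn with
  | nil => rfl
  | append_singleton w z =>
    rw [insertBefore_append, insertBefore_cons]
    split_ifs <;> simp [insertBefore]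

lemma eq_of_insertBefore_eq {y : α} (ha : a ∉ w) (hx : x ∈ w)
    (h : insertBefore a x w = insertBefore a y w) : x = y := by
  induction w with
  | nil => exact absurd hx List.not_mem_nil
  | cons z w ih =>
    rw [List.mem_cons, not_or] at ha
    rw [insertBefore_cons, insertBefore_cons] at h
    split_ifs at h with hzx hzy hzy
    · exact hzx.symm.trans hzy
    · exact absurd (List.cons.inj h).1 ha.1
    · exact absurd (List.cons.inj h).1.symm ha.1
    · exact ih ha.2 ((List.mem_cons.1 hx).resolve_left (Ne.symm hzx)) (List.append_cancel_left h)

end ListInsertion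

section ListPartitions

open Function

variable {α : Type*} {k : ℕ} {s : Finset α} {a x : α} {u v w : List α} {L : Fin k → List α}

/-- `L` is a sequence of `k` nonempty lists without repetitions, with disjoint underlying sets
whose union is `s`. Adding up the lists as multisets expresses all but the nonemptiness in one
equation. -/
def IsListPartition (s : Finset α) (L : Fin k → List α) : Prop :=
  (∀ b, L b ≠ []) ∧ ∑ b, (L b : Multiset α) = s.val

namespace IsListPartition

lemma mem_iff (h : IsListPartition s L) : x ∈ s ↔ ∃ b, x ∈ L b := by
  simpa using ((sum_eq_val_iff _ _ _).1 h.2).2.2 x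

lemma mem (h : IsListPartition s L) {b : Fin k} (hx : x ∈ L b) : x ∈ s :=
  h.mem_iff.2 ⟨b, hx⟩

lemma nodup (h : IsListPartition s L) (b : Fin k) : (L b).Nodup :=
  ((sum_eq_val_iff _ _ _).1 h.2).1 b (mem_univ b)

lemma eq_of_mem (h : IsListPartition s L) {b c : Fin k} (hb : x ∈ L b) (hc : x ∈ L c) :
    b = c := by
  by_contra hne
  exact Multiset.disjoint_left.1 (((sum_eq_val_iff _ _ _).1 h.2).2.1 b (mem_univ b) c
    (mem_univ c) hne) hb hc

end IsListPartition

lemma isListOfLists_iff_isListPartition_univ {n k : ℕ} {L : Fin k → List (Fin n)} :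
    IsListOfLists n k L ↔ IsListPartition univ L := by
  simp only [IsListOfLists, IsListPartition, sum_eq_val_iff]
  simp [Multiset.disjoint_left]

lemma sum_apply_update {ι β A : Type*} [Fintype ι] [DecidableEq ι] [AddCommMonoid A] (f : β → A)
    (g : ι → β) {i : ι} {y : β} {d : A} (h : f y = d + f (g i)) :
    ∑ j, f (update g i y j) = d + ∑ j, f (g j) := by
  rw [Fintype.sum_eq_add_sum_compl i, Fintype.sum_eq_add_sum_compl i fun j => f (g j),
    update_self, h, add_assoc]
  congr 2
  exact sum_congr rfl fun j hj => by rw [update_of_ne (by simpa using hj)]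

variable [DecidableEq α]

lemma isListPartition_update_iff (ha : a ∉ s) {b : Fin k} (hb : L b ≠ [])
    (hw : w.Perm (a :: L b)) :
    IsListPartition (insert a s) (update L b w) ↔ IsListPartition s L := by
  have hsum : ∑ c, (update L b w c : Multiset α) = a ::ₘ ∑ c, (L c : Multiset α) := by
    rw [← Multiset.singleton_add]
    exact sum_apply_update (fun w : List α => (w : Multiset α)) L (Multiset.coe_eq_coe.2 hw)
  have hne : (∀ c, update L b w c ≠ []) ↔ ∀ c, L c ≠ [] := by
    refine forall_congr' fun c => ?_
    rcases eq_or_ne c b with rfl | hc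
    · simpa [hb] using fun h => List.cons_ne_nil _ _ (h ▸ hw).nil_eq.symm
    · rw [update_of_ne hc]
  rw [IsListPartition, IsListPartition, hne, hsum, insert_val_of_notMem ha,
    Multiset.cons_inj_right]

lemma isListPartition_insertNth_iff (ha : a ∉ s) (p : Fin (k + 1)) :
    IsListPartition (insert a s) (p.insertNth (α := fun _ => List α) [a] L) ↔
      IsListPartition s L := by
  simp [IsListPartition, Fin.forall_iff_succAbove p, Fin.sum_univ_succAbove _ p,
    insert_val_of_notMem ha]

lemma IsListPartition.insertBefore_comp_eq_update (h : IsListPartition s L) {b : Fin k}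
    (hb : L b = u ++ x :: v) (a : α) :
    insertBefore a x ∘ L = update L b (u ++ a :: x :: v) := by
  have hxb : x ∈ L b := hb ▸ List.mem_append_cons_self
  obtain ⟨hu, hv⟩ : x ∉ u ∧ x ∉ v := by
    simpa [not_or] using (List.nodup_middle.1 (hb ▸ h.nodup b)).notMem
  refine eq_update_iff.2 ⟨?_, fun c hc => ?_⟩
  · rw [comp_apply, hb, insertBefore_append_cons a hu hv]
  · exact insertBefore_of_notMem a fun hx => hc (h.eq_of_mem hx hxb)

end ListPartitions

section Insertions

open Function

variable {α : Type*} {k : ℕ} {s : Finset α} {a : α} {I J : Set (Fin (k + 1))}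
  {T T' : Set (Fin k → List α)} {M : Fin k → List α}

lemma encard_image2_of_injective {β γ δ : Type*} {f : β → γ → δ} {S : Set β} {T : Set γ}
    (hf : ∀ x ∈ S, ∀ y ∈ T, ∀ x' ∈ S, ∀ y' ∈ T, f x y = f x' y' → x = x' ∧ y = y') :
    (Set.image2 f S T).encard = S.encard * T.encard := by
  rw [← Set.image_uncurry_prod, Set.InjOn.encard_image, Set.encard_prod]
  rintro ⟨x, y⟩ ⟨hx, hy⟩ ⟨x', y'⟩ ⟨hx', hy'⟩ h
  exact Prod.ext_iff.2 (hf x hx y hy x' hx' y' hy' h)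

/-- The sequences of lists obtained by putting `a` immediately before an element of `s` in a
sequence in `T`. -/
def insertionsBefore [DecidableEq α] (a : α) (s : Finset α) (T : Set (Fin k → List α)) :
    Set (Fin k → List α) :=
  Set.image2 (fun x L => insertBefore a x ∘ L) s T

/-- The sequences of lists obtained by putting `a` at the end of a list of a sequence in `T`. -/
def insertionsAtEnd (a : α) (T : Set (Fin k → List α)) : Set (Fin k → List α) :=
  Set.image2 (fun b L => update L b (L b ++ [a])) Set.univ T

/-- The sequences of lists obtained by inserting the list `[a]` into a sequence in `T` as its
`p`-th term, for some `p ∈ I`. -/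
def insertionsAsBlock (a : α) (I : Set (Fin (k + 1))) (T : Set (Fin k → List α)) :
    Set (Fin (k + 1) → List α) :=
  Set.image2 (fun p L => p.insertNth (α := fun _ => List α) [a] L) I T

lemma encard_insertionsBefore [DecidableEq α] (hT : ∀ L ∈ T, IsListPartition s L) (ha : a ∉ s) :
    (insertionsBefore a s T).encard = #s * T.encard := by
  rw [insertionsBefore, encard_image2_of_injective, Set.encard_coe_eq_coe_finsetCard]
  intro x hx L hL y _ K hK h
  have hLK : L = K := by
    ext1 b
    rw [← filter_ne_insertBefore x fun h => ha ((hT L hL).mem h),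
      ← filter_ne_insertBefore y fun h => ha ((hT K hK).mem h)]
    exact congrArg (List.filter (· ≠ a)) (congrFun h b)
  subst hLK
  obtain ⟨b, hb⟩ := (hT L hL).mem_iff.1 hx
  exact ⟨eq_of_insertBefore_eq (fun h => ha ((hT L hL).mem h)) hb (congrFun h b), rfl⟩

lemma encard_insertionsAtEnd (hT : ∀ L ∈ T, ∀ b, a ∉ L b) :
    (insertionsAtEnd a T).encard = k * T.encard := by
  rw [insertionsAtEnd, encard_image2_of_injective, Set.encard_univ,
    ENat.card_eq_coe_fintype_card, Fintype.card_fin]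
  intro b _ L _ c _ K hK h
  obtain rfl : b = c := by
    by_contra hbc
    have hb := congrFun h b
    rw [update_self, update_of_ne hbc] at hb
    exact hT K hK b (hb ▸ List.mem_append_right _ (List.mem_singleton_self a))
  refine ⟨rfl, funext fun c => ?_⟩
  have hc := congrFun h c
  rcases eq_or_ne c b with rfl | hcb
  · rw [update_self, update_self] at hc
    exact List.append_cancel_right hc
  · rwa [update_of_ne hcb, update_of_ne hcb] at hc

lemma eq_of_insertNth_singleton_eq {L K : Fin k → List α} (hK : ∀ b, a ∉ K b) {p q : Fin (k + 1)}
    (h : p.insertNth (α := fun _ => List α) [a] L = q.insertNth (α := fun _ => List α) [a] K) :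
    p = q ∧ L = K := by
  obtain rfl : p = q := by
    by_contra hpq
    obtain ⟨c, rfl⟩ := Fin.exists_succAbove_eq hpq
    have hc := congrFun h (q.succAbove c)
    rw [Fin.insertNth_apply_same, Fin.insertNth_apply_succAbove] at hc
    exact hK c (hc ▸ List.mem_singleton_self a)
  exact ⟨rfl, (Fin.insertNth_inj.1 h).2⟩

lemma encard_insertionsAsBlock (hT : ∀ L ∈ T, ∀ b, a ∉ L b) :
    (insertionsAsBlock a I T).encard = I.encard * T.encard :=
  encard_image2_of_injective fun _ _ _ _ _ _ K hK => eq_of_insertNth_singleton_eq (hT K hK)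

lemma disjoint_insertionsAsBlock (hIJ : Disjoint I J) (hT : ∀ L ∈ T', ∀ b, a ∉ L b) :
    Disjoint (insertionsAsBlock a I T) (insertionsAsBlock a J T') := by
  rw [Set.disjoint_left] at hIJ ⊢
  rintro _ ⟨p, hp, L, -, rfl⟩ ⟨q, hq, K, hK, h⟩
  exact hIJ hp ((eq_of_insertNth_singleton_eq (hT K hK) h.symm).1 ▸ hq)

lemma disjoint_insertionsBefore_of_getLast? [DecidableEq α] (hT : ∀ L ∈ T, ∀ b, a ∉ L b)
    (hT' : ∀ M ∈ T', ∃ b, (M b).getLast? = some a) : Disjoint (insertionsBefore a s T) T' := by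
  rw [Set.disjoint_left]
  rintro _ ⟨x, -, L, hL, rfl⟩ hM
  obtain ⟨b, hb⟩ := hT' _ hM
  replace hb : (insertBefore a x (L b)).getLast? = some a := hb
  rw [getLast?_insertBefore] at hb
  exact hT L hL b (List.mem_of_getLast? hb)

lemma disjoint_insertionsAtEnd_insertionsAsBlock {T : Set (Fin (k + 1) → List α)}
    (hT : ∀ L ∈ T, ∀ b, a ∉ L b ∧ L b ≠ []) :
    Disjoint (insertionsAtEnd a T) (insertionsAsBlock a I T') := by
  rw [Set.disjoint_left]
  rintro _ ⟨b, -, L, hL, rfl⟩ ⟨p, -, K, -, h⟩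
  have hp : [a] = update L b (L b ++ [a]) p :=
    (Fin.insertNth_apply_same (α := fun _ => List α) p [a] K).symm.trans (congrFun h p)
  rcases eq_or_ne p b with rfl | hpb
  · rw [update_self] at hp
    exact (hT L hL p).2 (by simpa using hp.symm)
  · rw [update_of_ne hpb] at hp
    exact (hT L hL p).1 (hp ▸ List.mem_singleton_self a)

lemma exists_getLast?_eq_of_mem_insertionsAtEnd (hM : M ∈ insertionsAtEnd a T) :
    ∃ b, (M b).getLast? = some a := by
  obtain ⟨b, -, L, -, rfl⟩ := hM
  exact ⟨b, by simp⟩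

lemma exists_getLast?_eq_of_mem_insertionsAsBlock {I : Set (Fin (k + 1))}
    {T : Set (Fin k → List α)} {M : Fin (k + 1) → List α}
    (hM : M ∈ insertionsAsBlock a I T) : ∃ b, (M b).getLast? = some a := by
  obtain ⟨p, -, L, -, rfl⟩ := hM
  exact ⟨p, by simp⟩

end Insertions

section Statistics

variable {α : Type*} [LinearOrder α] {k : ℕ} {s : Finset α} {a : α} {u v w : List α}
  {L : Fin k → List α}

lemma nseList_append_cons (hu : ∀ y ∈ u, y < a) (hv : ∀ y ∈ v, y < a) :
    nseList (u ++ a :: v) = (if v = [] then 0 else 1) + nseList (u ++ v) := by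
  induction u with
  | nil =>
    cases v with
    | nil => simp [nseList]
    | cons z v => simp [nseList, hv z]
  | cons z u ih =>
    have hz : ¬a < z := (hu z List.mem_cons_self).le.not_gt
    rw [List.cons_append, nseList, ih fun y hy => hu y (List.mem_cons_of_mem z hy)]
    simp only [List.cons_append, nseList, List.mem_append, List.mem_cons, or_and_right,
      exists_or, exists_eq_left, hz, false_or]
    ring

lemma nseList_add_one_le_length (hw : w ≠ []) : nseList w + 1 ≤ w.length := by
  induction w with
  | nil => exact absurd rfl hw
  | cons z w ih =>
    by_cases hw : w = []
    · simp [hw, nseList]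
    · have := ih hw
      rw [nseList, List.length_cons]
      split_ifs <;> omega

lemma minimum_eq_of_perm_cons (hw : w ≠ []) (hlt : ∀ y ∈ w, y < a) (h : v.Perm (a :: w)) :
    v.minimum = w.minimum := by
  refine le_antisymm (List.le_minimum_of_forall_le fun y hy => List.minimum_le_of_mem'
    (h.mem_iff.2 (List.mem_cons_of_mem a hy))) (List.le_minimum_of_forall_le fun y hy => ?_)
  rcases List.mem_cons.1 (h.mem_iff.1 hy) with rfl | hy
  · obtain ⟨z, hz⟩ := List.exists_mem_of_ne_nil w hw
    exact (List.minimum_le_of_mem' hz).trans (WithTop.coe_le_coe.2 (hlt z hz).le)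
  · exact List.minimum_le_of_mem' hy

/-- The statistic `nsb` for lists over an arbitrary linear order. -/
def nsb (L : Fin k → List α) : ℕ :=
  #{j | ∃ l, j < l ∧ (L l).minimum < (L j).minimum}

lemma nsb_lt (L : Fin (k + 1) → List α) : nsb L < k + 1 := by
  have hlast : Fin.last k ∉ ({j | ∃ l, j < l ∧ (L l).minimum < (L j).minimum} : Finset _) := by
    simp [Fin.le_last]
  simpa [nsb] using card_lt_univ_of_notMem hlast

lemma nsb_insertNth (hne : ∀ b, L b ≠ []) (hlt : ∀ b, ∀ y ∈ L b, y < a) (p : Fin (k + 1)) :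
    nsb (p.insertNth (α := fun _ => List α) [a] L) = nsb L + if p = Fin.last k then 0 else 1 := by
  have hmin (b : Fin k) : (L b).minimum < a := by
    obtain ⟨y, hy⟩ := List.exists_mem_of_ne_nil (L b) (hne b)
    exact (List.minimum_le_of_mem' hy).trans_lt (WithTop.coe_lt_coe.2 (hlt b y hy))
  have hlast : (∃ b, p < p.succAbove b) ↔ p ≠ Fin.last k := by
    refine ⟨?_, fun h => ?_⟩
    · rintro ⟨b, hb⟩ rfl
      exact hb.not_ge (Fin.le_last _)
    · obtain ⟨b, hb⟩ := Fin.exists_succAbove_eq (Ne.symm h)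
      exact ⟨b, hb ▸ Fin.lt_last_iff_ne_last.2 h⟩
  simp only [nsb, card_filter, Fin.sum_univ_succAbove _ p, Fin.exists_iff_succAbove p,
    Fin.insertNth_apply_same, Fin.insertNth_apply_succAbove, List.minimum_singleton,
    lt_self_iff_false, false_or, hmin, and_true, hlast, (hmin _).not_gt, and_false,
    Fin.succAbove_lt_succAbove_iff]
  rw [add_comm, ite_not]

lemma IsListPartition.sum_nseList_add_le (h : IsListPartition s L) :
    ∑ b, nseList (L b) + k ≤ #s := by
  have hlength : ∑ b, (L b).length = #s := by
    simpa using congrArg Multiset.card h.2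
  calc ∑ b, nseList (L b) + k = ∑ b, (nseList (L b) + 1) := by simp [sum_add_distrib]
    _ ≤ ∑ b, (L b).length := sum_le_sum fun b _ => nseList_add_one_le_length (h.1 b)
    _ = #s := hlength

end Statistics

section Counting

open Function

variable {α : Type*} [LinearOrder α] {k r m : ℕ} {s : Finset α} {a : α} {L : Fin k → List α}

/-- The partitions of `s` into `k` lists with `nsb = k - r` and `nse = #s - m`. The complements
`r` and `m` are the indices for which the Stirling recurrences hold without subtraction. -/
def listPartitions (s : Finset α) (k r m : ℕ) : Set (Fin k → List α) :=
  {L | IsListPartition s L ∧ nsb L + r = k ∧ ∑ b, nseList (L b) + m = #s}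

lemma mem_listPartitions : L ∈ listPartitions s k r m ↔
    IsListPartition s L ∧ nsb L + r = k ∧ ∑ b, nseList (L b) + m = #s :=
  Iff.rfl

lemma update_mem_listPartitions_iff (hs : ∀ y ∈ s, y < a) {b : Fin k} {u v : List α}
    (hb : L b = u ++ v) (hne : u ++ v ≠ []) :
    update L b (u ++ a :: v) ∈ listPartitions (insert a s) k r (m + 1) ↔
      L ∈ listPartitions s k r (m + if v = [] then 0 else 1) := by
  have ha : a ∉ s := fun h => (hs a h).false
  have hperm : (u ++ a :: v).Perm (a :: L b) := hb ▸ List.perm_middle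
  rw [mem_listPartitions, mem_listPartitions, isListPartition_update_iff ha (hb ▸ hne) hperm]
  refine and_congr_right fun hL => ?_
  have hlt : ∀ y ∈ L b, y < a := fun y hy => hs y (hL.mem hy)
  have hnsb : nsb (update L b (u ++ a :: v)) = nsb L := by
    have hmin (c : Fin k) : (update L b (u ++ a :: v) c).minimum = (L c).minimum := by
      rcases eq_or_ne c b with rfl | hc
      · rw [update_self, minimum_eq_of_perm_cons (hb ▸ hne) hlt hperm]
      · rw [update_of_ne hc]
    simp only [nsb, hmin]
  have hnse : ∑ c, nseList (update L b (u ++ a :: v) c) =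
      (if v = [] then 0 else 1) + ∑ c, nseList (L c) := by
    refine sum_apply_update nseList L ?_
    rw [hb] at hlt ⊢
    exact nseList_append_cons (fun y hy => hlt y (List.mem_append_left v hy))
      fun y hy => hlt y (List.mem_append_right u hy)
  rw [hnsb, hnse, card_insert_of_notMem ha]
  omega

lemma insertNth_mem_listPartitions_iff (hs : ∀ y ∈ s, y < a) (p : Fin (k + 1)) :
    p.insertNth (α := fun _ => List α) [a] L ∈
        listPartitions (insert a s) (k + 1) (r + 1) (m + 1) ↔
      L ∈ listPartitions s k (if p = Fin.last k then r else r + 1) m := by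
  have ha : a ∉ s := fun h => (hs a h).false
  rw [mem_listPartitions, mem_listPartitions, isListPartition_insertNth_iff ha]
  refine and_congr_right fun hL => ?_
  have hnse : nseList [a] = 0 := by simp [nseList]
  rw [nsb_insertNth hL.1 fun b y hy => hs y (hL.mem hy), card_insert_of_notMem ha,
    Fin.sum_univ_succAbove _ p]
  simp only [Fin.insertNth_apply_same, Fin.insertNth_apply_succAbove, hnse]
  split_ifs <;> omega

lemma insertionsBefore_subset_listPartitions (hs : ∀ y ∈ s, y < a) :
    insertionsBefore a s (listPartitions s k r (m + 1)) ⊆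
      listPartitions (insert a s) k r (m + 1) := by
  rintro _ ⟨x, hx, L, hL, rfl⟩
  obtain ⟨b, hb⟩ := hL.1.mem_iff.1 hx
  obtain ⟨u, v, huv⟩ := List.append_of_mem hb
  beta_reduce
  rw [hL.1.insertBefore_comp_eq_update huv]
  exact (update_mem_listPartitions_iff hs huv (by simp)).2 hL

lemma insertionsAtEnd_subset_listPartitions (hs : ∀ y ∈ s, y < a) :
    insertionsAtEnd a (listPartitions s k r m) ⊆ listPartitions (insert a s) k r (m + 1) := by
  rintro _ ⟨b, -, L, hL, rfl⟩
  exact (update_mem_listPartitions_iff hs (by simp) (by simpa using hL.1.1 b)).2 hL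

lemma listPartitions_insert (hs : ∀ y ∈ s, y < a) (k r m : ℕ) :
    listPartitions (insert a s) (k + 1) (r + 1) (m + 1) =
      insertionsBefore a s (listPartitions s (k + 1) (r + 1) (m + 1)) ∪
      (insertionsAtEnd a (listPartitions s (k + 1) (r + 1) m) ∪
      (insertionsAsBlock a {Fin.last k} (listPartitions s k r m) ∪
      insertionsAsBlock a {Fin.last k}ᶜ (listPartitions s k (r + 1) m))) := by
  ext M
  constructor
  · intro hM
    obtain ⟨b, hb⟩ := hM.1.mem_iff.1 (mem_insert_self a s)
    obtain ⟨u, v, huv⟩ := List.append_of_mem hb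
    by_cases hnil : u ++ v = []
    · obtain ⟨rfl, rfl⟩ := List.append_eq_nil_iff.1 hnil
      have hM' : b.insertNth (α := fun _ => List α) [a] (b.removeNth M) = M :=
        Fin.insertNth_eq_iff.2 ⟨huv.symm, rfl⟩
      rw [← hM', insertNth_mem_listPartitions_iff hs] at hM
      split_ifs at hM with hlast
      · exact .inr (.inr (.inl ⟨b, hlast, _, hM, hM'⟩))
      · exact .inr (.inr (.inr ⟨b, hlast, _, hM, hM'⟩))
    · set L := update M b (u ++ v)
      have hLb : L b = u ++ v := update_self ..
      have hM' : update L b (u ++ a :: v) = M := by rw [update_idem, ← huv, update_eq_self]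
      rw [← hM', update_mem_listPartitions_iff hs hLb hnil] at hM
      cases v with
      | nil => exact .inr (.inl ⟨b, trivial, L, hM, by simpa [hLb] using hM'⟩)
      | cons x v =>
        have hx : x ∈ s := hM.1.mem (b := b) (hLb ▸ List.mem_append_cons_self)
        exact .inl ⟨x, hx, L, hM, (hM.1.insertBefore_comp_eq_update hLb a).trans hM'⟩
  · rintro (h | h | ⟨_, rfl, L, hL, rfl⟩ | ⟨p, hp, L, hL, rfl⟩)
    · exact insertionsBefore_subset_listPartitions hs h
    · exact insertionsAtEnd_subset_listPartitions hs h
    · exact (insertNth_mem_listPartitions_iff hs _).2 (by rwa [if_pos rfl])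
    · have hp : p ≠ Fin.last k := hp
      exact (insertNth_mem_listPartitions_iff hs p).2 (by rwa [if_neg hp])

lemma encard_listPartitions_insert (hs : ∀ y ∈ s, y < a) (k r m : ℕ) :
    (listPartitions (insert a s) (k + 1) (r + 1) (m + 1)).encard =
      #s * (listPartitions s (k + 1) (r + 1) (m + 1)).encard +
      ((k + 1) * (listPartitions s (k + 1) (r + 1) m).encard +
      ((listPartitions s k r m).encard + k * (listPartitions s k (r + 1) m).encard)) := by
  have ha : a ∉ s := fun h => (hs a h).false
  have hnew {k r m : ℕ} : ∀ L ∈ listPartitions s k r m, ∀ b, a ∉ L b :=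
    fun L hL b h => ha (hL.1.mem h)
  have hcompl : ({Fin.last k}ᶜ : Set (Fin (k + 1))).encard = k := by
    rw [← coe_singleton, ← coe_compl, Set.encard_coe_eq_coe_finsetCard, card_compl,
      card_singleton, Fintype.card_fin, Nat.add_sub_cancel]
  have hend : Disjoint (insertionsAtEnd a (listPartitions s (k + 1) (r + 1) m))
      (insertionsAsBlock a {Fin.last k} (listPartitions s k r m) ∪
      insertionsAsBlock a {Fin.last k}ᶜ (listPartitions s k (r + 1) m)) :=
    Set.disjoint_union_right.2
      ⟨disjoint_insertionsAtEnd_insertionsAsBlock fun L hL b => ⟨hnew L hL b, hL.1.1 b⟩,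
      disjoint_insertionsAtEnd_insertionsAsBlock fun L hL b => ⟨hnew L hL b, hL.1.1 b⟩⟩
  rw [listPartitions_insert hs, Set.encard_union_eq, Set.encard_union_eq hend,
    Set.encard_union_eq (disjoint_insertionsAsBlock disjoint_compl_right hnew),
    encard_insertionsBefore (fun _ hL => hL.1) ha, encard_insertionsAtEnd hnew,
    encard_insertionsAsBlock hnew, encard_insertionsAsBlock hnew, Set.encard_singleton, one_mul,
    hcompl, Nat.cast_add_one]
  refine disjoint_insertionsBefore_of_getLast? hnew ?_
  rintro M (hM | hM | hM)
  exacts [exists_getLast?_eq_of_mem_insertionsAtEnd hM,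
    exists_getLast?_eq_of_mem_insertionsAsBlock hM, exists_getLast?_eq_of_mem_insertionsAsBlock hM]

lemma listPartitions_eq_empty_of_lt (h : m < k) : listPartitions s k r m = ∅ := by
  refine Set.eq_empty_of_forall_notMem fun L hL => ?_
  have hle : ∑ b, nseList (L b) + k ≤ #s := hL.1.sum_nseList_add_le
  have heq : ∑ b, nseList (L b) + m = #s := hL.2.2
  omega

lemma listPartitions_zero_middle (s : Finset α) (k m : ℕ) :
    listPartitions s (k + 1) 0 m = ∅ :=
  Set.eq_empty_of_forall_notMem fun L hL => (nsb_lt L).ne hL.2.1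

lemma listPartitions_zero_left (s : Finset α) (r m : ℕ) :
    listPartitions s 0 r m = {_L | s = ∅ ∧ r = 0 ∧ m = 0} := by
  ext L
  have hnsb : nsb L = 0 := by simp [nsb]
  simp only [mem_listPartitions, IsListPartition, hnsb, univ_eq_empty, sum_empty, zero_add,
    IsEmpty.forall_iff, true_and, @eq_comm _ 0 s.val, val_eq_zero, Set.mem_ofPred_eq]
  exact and_congr_right fun hs => by rw [hs, card_empty]

lemma listPartitions_empty_succ (k r m : ℕ) :
    listPartitions (∅ : Finset α) (k + 1) r m = ∅ := by
  refine Set.eq_empty_of_forall_notMem fun L hL => ?_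
  have hle : ∑ b, nseList (L b) + (k + 1) ≤ 0 := hL.1.sum_nseList_add_le
  omega

theorem encard_listPartitions (s : Finset α) (k r m : ℕ) :
    (listPartitions s k r m).encard =
      (Nat.stirlingFirst #s m * Nat.stirlingSecond m k * Nat.stirlingFirst k r : ℕ) := by
  induction s using Finset.induction_on_max generalizing k r m with
  | empty =>
    cases k with
    | zero => cases r <;> cases m <;> simp [listPartitions_zero_left]
    | succ k => cases m <;> simp [listPartitions_empty_succ]
  | insert a s hs ih =>
    have ha : a ∉ s := fun h => (hs a h).false
    rw [card_insert_of_notMem ha]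
    match k, r, m with
    | 0, r, m => cases r <;> cases m <;> simp [listPartitions_zero_left]
    | k + 1, r, 0 => simp [listPartitions_eq_empty_of_lt]
    | k + 1, 0, m + 1 => simp [listPartitions_zero_middle]
    | k + 1, r + 1, m + 1 =>
      rw [encard_listPartitions_insert hs, ih, ih, ih, ih, Nat.stirlingFirst_succ_succ,
        Nat.stirlingSecond_succ_succ, Nat.stirlingFirst_succ_succ]
      push_cast
      ring

theorem list_of_lists_nsb_nse_count_general (s : Finset α) (k i j : ℕ) (hi : i ≤ k)
    (hj : j ≤ #s) :
    Set.ncard {L : Fin k → List α | IsListPartition s L ∧ nsb L = i ∧ ∑ b, nseList (L b) = j} =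
      stirlingFirst #s (#s - j) * stirlingSecond (#s - j) k * stirlingFirst k (k - i) := by
  have hset : {L : Fin k → List α | IsListPartition s L ∧ nsb L = i ∧ ∑ b, nseList (L b) = j} =
      listPartitions s k (k - i) (#s - j) := by
    ext L
    rw [mem_listPartitions, Set.mem_ofPred_eq]
    refine and_congr_right fun _ => ?_
    omega
  rw [hset, Set.ncard, encard_listPartitions, ENat.toNat_natCast, stirlingFirst_eq_natStirlingFirst,
    stirlingSecond_eq_natStirlingSecond, stirlingFirst_eq_natStirlingFirst]

end Counting

/-- For `1 ≤ k ≤ n`, `0 ≤ i ≤ k-1` and `0 ≤ j ≤ n-k`, the number of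
ordered partitions of `[n]` into `k` nonempty lists with `nsb = i` and `nse = j`
equals `c(n, n-j) * S(n-j, k) * c(k, k-i)`. -/
theorem list_of_lists_nsb_nse_count (n k i j : ℕ) (hk : 1 ≤ k) (hkn : k ≤ n)
    (hi : i ≤ k - 1) (hj : j ≤ n - k) :
    Set.ncard {L : Fin k → List (Fin n) |
        IsListOfLists n k L ∧ nsbLL L = i ∧ nseLL L = j} =
      stirlingFirst n (n - j) * stirlingSecond (n - j) k * stirlingFirst k (k - i) := by
  have hcount := list_of_lists_nsb_nse_count_general (univ : Finset (Fin n)) k i j (by omega)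
    (by rw [card_fin]; omega)
  simp only [← isListOfLists_iff_isListPartition_univ, card_fin] at hcount
  exact hcount
end

section
/- For all integers n, j with n ≥ 1 and 0 ≤ j ≤ n−1, the number of ordered partitions π of [n] = {1,…,n} into k nonempty lists, summed over all k from 1 to n−j, with nse(π) = j, equals ∑_{k=1}^{n−j} c(n,n−j) · S(n−j,k) · k! , i.e., the marginal distribution of nse over lists of lists with k blocks is c(n,n−j) · S(n−j,k) · k!. -/
open Finset

/-- The number of ordered partitions of `[n]` into `k` nonempty lists with `nse = j`. -/
noncomputable def llpNseCount (n k j : ℕ) : ℕ :=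
  Set.ncard {L : Fin k → List (Fin n) | IsListOfLists n k L ∧ nseLL L = j}

/-!
In a list `w`, the positions not counted by `nse` are the right-to-left minima, so a list of lists
on `[n]` has `nse = j` exactly when its blocks have `n - j` right-to-left minima in total. Choosing
the first entry of a list shows that the right-to-left minima of the orderings of an `m`-element set
have generating function `x (x + 1) ⋯ (x + m - 1)`, the rising factorial, whose coefficients are the
Stirling numbers of the first kind. Hence the lists of lists with `k` blocks have as generating
function the sum, over the surjections `f : [n] → [k]`, of the products of the rising factorials of
`x` of lengths `|f⁻¹(i)|`.

For the sum over all functions `f : [n] → T` instead, the multinomial Chu-Vandermonde identity gives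
the rising factorial of `|T| x`, with `x ^ m` coefficient `c(n, m) |T| ^ m`, and `|T| ^ m` is the
number of functions `[m] → T`. Splitting both sums according to the image of the function turns
this into `c(n, m)` times the number of surjections `[m] → [k]`, which is `c(n, m) S(m, k) k!`.
-/

section Cycles

open Equiv Equiv.Perm

theorem cycleCount_add_card_support {n : ℕ} (σ : Perm (Fin n)) :
    cycleCount σ + #σ.support = σ.cycleType.card + n := by
  have hfix : #{x | σ x = x} + #σ.support = n :=
    (card_filter_add_card_filter_not fun x => σ x = x).trans (card_fin n)
  rw [cycleCount, add_assoc, hfix]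

theorem cycleCount_mul_add_of_disjoint {n : ℕ} {σ τ : Perm (Fin n)} (h : σ.Disjoint τ) :
    cycleCount (σ * τ) + n = cycleCount σ + cycleCount τ := by
  have hσ := cycleCount_add_card_support σ
  have hτ := cycleCount_add_card_support τ
  have hστ := cycleCount_add_card_support (σ * τ)
  rw [h.card_support_mul, h.cycleType_mul, Multiset.card_add] at hστ
  lia

theorem cycleCount_add_card_support_of_isCycle {n : ℕ} {σ : Perm (Fin n)} (h : σ.IsCycle) :
    cycleCount σ + #σ.support = 1 + n := by
  rw [cycleCount_add_card_support, h.cycleType, Multiset.card_singleton]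

theorem cycleCount_swap_mul_of_isCycle {n : ℕ} {σ : Perm (Fin n)} (h : σ.IsCycle) {x : Fin n}
    (hx : σ x ≠ x) : cycleCount (swap x (σ x) * σ) = cycleCount σ + 1 := by
  have hσ := cycleCount_add_card_support_of_isCycle h
  by_cases hxx : σ (σ x) = x
  · have hswap : σ = swap x (σ x) := h.eq_swap_of_apply_apply_eq_self hx hxx
    have hone : swap x (σ x) * σ = 1 := by
      nth_rw 2 [hswap]
      exact swap_mul_self x (σ x)
    have hcard : #σ.support = 2 := by
      rw [hswap]
      exact card_support_swap hx.symm
    have hid := cycleCount_add_card_support (1 : Perm (Fin n))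
    simp only [support_one, card_empty, cycleType_one, Multiset.card_zero] at hid
    rw [hone]
    lia
  · have hcard : #(swap x (σ x) * σ).support + 1 = #σ.support := by
      rw [support_swap_mul_eq σ x hxx, sdiff_singleton_eq_erase]
      exact card_erase_add_one (mem_support.2 hx)
    have hswap := cycleCount_add_card_support_of_isCycle (h.swap_mul hx hxx)
    lia

-- The cycle of `σ` through `x` is split into the fixed point `x` and a cycle on its other points;
-- the remaining cycles are unchanged.
theorem cycleCount_swap_mul {n : ℕ} {σ : Perm (Fin n)} {x : Fin n} (hx : σ x ≠ x) :
    cycleCount (swap x (σ x) * σ) = cycleCount σ + 1 := by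
  set c := σ.cycleOf x with hc
  have hcx : c x = σ x := cycleOf_apply_self σ x
  have hdisj : c.Disjoint (σ * c⁻¹) := (disjoint_mul_inv_of_mem_cycleFactorsFinset
    (cycleOf_mem_cycleFactorsFinset_iff.2 (mem_support.2 hx))).symm
  have hσ : σ = c * (σ * c⁻¹) := by rw [hdisj.commute.eq, inv_mul_cancel_right]
  have hswap_disj : (swap x (σ x) * c).Disjoint (σ * c⁻¹) := by
    rw [← hcx]
    exact hdisj.mono (fun y hy => (mem_support_swap_mul_imp_mem_support_ne hy).1) subset_rfl
  have hcycle := cycleCount_swap_mul_of_isCycle (isCycle_cycleOf σ hx) (hcx.trans_ne hx)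
  rw [← hc, hcx] at hcycle
  have hbefore := cycleCount_mul_add_of_disjoint hdisj
  have hafter := cycleCount_mul_add_of_disjoint hswap_disj
  rw [mul_assoc, ← hσ] at hafter
  rw [← hσ] at hbefore
  lia

theorem cycleCount_decomposeFin_symm_zero {n : ℕ} (σ : Perm (Fin n)) :
    cycleCount (decomposeFin.symm (0, σ)) = cycleCount σ + 1 := by
  have hextend : decomposeFin.symm (0, σ) =
      σ.extendDomain (finSuccAboveEquiv (0 : Fin (n + 1))) := by
    ext x
    cases x using Fin.cases with
    | zero => rw [extendDomain_apply_not_subtype] <;> simp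
    | succ i =>
      have hsucc : σ.extendDomain (finSuccAboveEquiv (0 : Fin (n + 1))) i.succ = (σ i).succ :=
        extendDomain_apply_image σ (finSuccAboveEquiv 0) i
      rw [hsucc]
      simp
  have hσ := cycleCount_add_card_support σ
  have hσ' := cycleCount_add_card_support (decomposeFin.symm (0, σ))
  rw [hextend, cycleType_extendDomain, card_support_extend_domain, ← hextend] at hσ'
  lia

theorem cycleCount_decomposeFin_symm_of_ne_zero {n : ℕ} {p : Fin (n + 1)} (hp : p ≠ 0)
    (σ : Perm (Fin n)) : cycleCount (decomposeFin.symm (p, σ)) = cycleCount σ := by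
  have hswap : swap 0 (decomposeFin.symm (p, σ) 0) * decomposeFin.symm (p, σ) =
      decomposeFin.symm (0, σ) := by
    ext x
    cases x using Fin.cases <;> simp
  have h := cycleCount_swap_mul (σ := decomposeFin.symm (p, σ)) (x := 0) (by simpa using hp)
  rw [hswap, cycleCount_decomposeFin_symm_zero] at h
  lia

end Cycles

section RisingFactorial

open Polynomial

theorem coeff_sum_X_pow {R β : Type*} [Semiring R] (s : Finset β) (f : β → ℕ) (m : ℕ) :
    (∑ b ∈ s, (X : R[X]) ^ f b).coeff m = #{b ∈ s | f b = m} := by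
  simp [finsetSum_coeff, coeff_X_pow, eq_comm]

theorem ascPochhammer_eval_X (R : Type*) [CommSemiring R] (n : ℕ) :
    (ascPochhammer R[X] n).eval X = ascPochhammer R n := by
  rw [ascPochhammer_eval₂ C, eval₂_C_X]

theorem sum_X_pow_cycleCount (n : ℕ) :
    ∑ σ : Equiv.Perm (Fin n), (X : ℕ[X]) ^ cycleCount σ = ascPochhammer ℕ n := by
  induction n with
  | zero => simp [cycleCount]
  | succ n ih =>
    rw [← Equiv.Perm.decomposeFin.symm.sum_comp, Fintype.sum_prod_type, Fin.sum_univ_succ]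
    simp only [cycleCount_decomposeFin_symm_zero,
      cycleCount_decomposeFin_symm_of_ne_zero (Fin.succ_ne_zero _), pow_succ, ← sum_mul, ih,
      sum_const, card_univ, Fintype.card_fin, nsmul_eq_mul]
    rw [ascPochhammer_succ_right, mul_add, Nat.cast_comm]

theorem stirlingFirst_eq_coeff_ascPochhammer (n m : ℕ) :
    stirlingFirst n m = (ascPochhammer ℕ n).coeff m := by
  rw [← sum_X_pow_cycleCount, coeff_sum_X_pow, stirlingFirst, Nat.cast_id, ← Set.ncard_coe_finset]
  simp

/-- The set of preimages of `b` under `f`, as a finset. The fibers of a surjection onto `Fin k` are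
the blocks of an ordered set partition. -/
def fiber {α β : Type*} [Fintype α] [DecidableEq β] (f : α → β) (b : β) : Finset α := {a | f a = b}

@[simp]
theorem mem_fiber {α β : Type*} [Fintype α] [DecidableEq β] {f : α → β} {b : β} {a : α} :
    a ∈ fiber f b ↔ f a = b := by
  simp [fiber]

theorem sum_piFinset_fin_succ {ι M : Type*} [AddCommMonoid M] {n : ℕ}
    (s : Finset ι) (F : (Fin (n + 1) → ι) → M) :
    ∑ f ∈ Fintype.piFinset fun _ => s, F f =
      ∑ i ∈ s, ∑ g ∈ Fintype.piFinset fun _ => s, F (Fin.cons i g) := by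
  rw [← sum_product']
  refine sum_nbij' (fun f => (f 0, Fin.tail f)) (fun p => Fin.cons p.1 p.2) ?_ ?_ ?_ ?_ ?_ <;>
    simp +contextual [Fin.forall_fin_succ, Fin.tail]

variable {ι : Type*} [DecidableEq ι]

theorem card_fiber_cons {n : ℕ} (i j : ι) (g : Fin n → ι) :
    #(fiber (Fin.cons i g : Fin (n + 1) → ι) j) = #(fiber g j) + if i = j then 1 else 0 := by
  rw [fiber, fiber, card_filter, Fin.sum_univ_succ, card_filter, add_comm]
  simp

theorem sum_card_fiber {α : Type*} [Fintype α] {s : Finset ι} {g : α → ι} (hg : ∀ x, g x ∈ s) :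
    ∑ i ∈ s, #(fiber g i) = Fintype.card α := by
  simpa [fiber] using (card_eq_sum_card_fiberwise (s := univ) fun x _ => hg x).symm

-- The multinomial Chu-Vandermonde identity: grouping the words `f` by their letter multiplicities
-- gives the usual multinomial coefficients.
theorem sum_prod_ascPochhammer_eval {R : Type*} [CommSemiring R] (s : Finset ι) (x : ι → R)
    (n : ℕ) :
    ∑ f ∈ Fintype.piFinset fun _ : Fin n => s,
        ∏ i ∈ s, (ascPochhammer R #(fiber f i)).eval (x i) =
      (ascPochhammer R n).eval (∑ i ∈ s, x i) := by
  induction n with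
  | zero => simp [fiber]
  | succ n ih =>
    have hcons (i : ι) (hi : i ∈ s) (g : Fin n → ι) :
        ∏ j ∈ s, (ascPochhammer R #(fiber (Fin.cons i g : Fin (n + 1) → ι) j)).eval (x j) =
          (∏ j ∈ s, (ascPochhammer R #(fiber g j)).eval (x j)) * (x i + #(fiber g i)) := by
      rw [← prod_erase_mul _ _ hi, ← prod_erase_mul s _ hi, card_fiber_cons, if_pos rfl,
        ascPochhammer_succ_eval, ← mul_assoc]
      congr 2
      refine prod_congr rfl fun j hj => ?_
      rw [card_fiber_cons, if_neg (ne_of_mem_erase hj).symm, add_zero]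
    rw [sum_piFinset_fin_succ, sum_comm, ascPochhammer_succ_eval, ← ih, sum_mul]
    refine sum_congr rfl fun g hg => ?_
    rw [sum_congr rfl fun i hi => hcons i hi g, ← mul_sum, sum_add_distrib, ← Nat.cast_sum,
      sum_card_fiber (Fintype.mem_piFinset.1 hg), Fintype.card_fin]

end RisingFactorial

section Surjections

open Polynomial

theorem eq_of_sum_powerset_eq {ι M : Type*} [AddCancelCommMonoid M] {F G : Finset ι → M}
    (h : ∀ s : Finset ι, ∑ t ∈ s.powerset, F t = ∑ t ∈ s.powerset, G t) (s : Finset ι) :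
    F s = G s := by
  classical
  induction s using Finset.strongInduction with
  | H s ih =>
    have hs := h s
    have hproper : ∑ t ∈ s.ssubsets, F t = ∑ t ∈ s.ssubsets, G t :=
      sum_congr rfl fun t ht => ih t (mem_ssubsets.1 ht)
    rw [← sum_erase_add _ _ (mem_powerset_self s), ← sum_erase_add _ _ (mem_powerset_self s)] at hs
    exact add_left_cancel (hproper ▸ hs)

variable {ι : Type*} [DecidableEq ι] [Fintype ι]

theorem sum_powerset_sum_image_eq {α M : Type*} [Fintype α] [DecidableEq α]
    [AddCommMonoid M] (F : (α → ι) → M) (s : Finset ι) :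
    ∑ t ∈ s.powerset, ∑ f with univ.image f = t, F f = ∑ f ∈ Fintype.piFinset fun _ => s, F f := by
  have hmem (f : α → ι) : f ∈ Fintype.piFinset (fun _ => s) ↔ univ.image f ⊆ s := by
    simp [image_subset_iff]
  rw [← sum_fiberwise_of_maps_to (g := fun f => univ.image f)
    fun f hf => mem_powerset.2 ((hmem f).1 hf)]
  refine sum_congr rfl fun t ht => sum_congr ?_ fun _ _ => rfl
  ext f
  have : univ.image f = t → univ.image f ⊆ s := fun hf => hf ▸ mem_powerset.1 ht
  simpa [hmem] using this

theorem coeff_sum_piFinset_prod_ascPochhammer (n m : ℕ) (s : Finset ι) :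
    (∑ f ∈ Fintype.piFinset fun _ : Fin n => s, ∏ i, ascPochhammer ℕ #(fiber f i)).coeff m =
      (ascPochhammer ℕ n).coeff m * #s ^ m := by
  have hprod (f : Fin n → ι) (hf : f ∈ Fintype.piFinset fun _ => s) :
      ∏ i, ascPochhammer ℕ #(fiber f i) =
        ∏ i ∈ s, (ascPochhammer ℕ[X] #(fiber f i)).eval X := by
    simp only [ascPochhammer_eval_X]
    refine (prod_subset (subset_univ s) fun i _ hi => ?_).symm
    have hempty : fiber f i = ∅ := filter_eq_empty_iff.2 fun x _ hx =>
      hi (hx ▸ Fintype.mem_piFinset.1 hf x)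
    rw [hempty, card_empty, ascPochhammer_zero]
  rw [sum_congr rfl hprod, sum_prod_ascPochhammer_eval s (fun _ => X), sum_const, nsmul_eq_mul,
    ascPochhammer_eval₂ C, ← C_eq_natCast, ← comp, comp_C_mul_X_coeff, Nat.cast_id]

-- Both sides, with surjectivity replaced by having image `t`, become explicit when summed over
-- all `t ⊆ s`: the right-hand side then counts the `#s ^ m` functions into `s`.
theorem coeff_sum_surjective_prod_ascPochhammer (n m : ℕ) :
    (∑ f : Fin n → ι with f.Surjective, ∏ i, ascPochhammer ℕ #(fiber f i)).coeff m =
      (ascPochhammer ℕ n).coeff m * #{f : Fin m → ι | f.Surjective} := by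
  have himage (t : Finset ι) :
      (∑ f : Fin n → ι with univ.image f = t, ∏ i, ascPochhammer ℕ #(fiber f i)).coeff m =
        (ascPochhammer ℕ n).coeff m * #{f : Fin m → ι | univ.image f = t} := by
    revert t
    refine eq_of_sum_powerset_eq fun s => ?_
    have hcount : ∑ t ∈ s.powerset, #{f : Fin m → ι | univ.image f = t} = #s ^ m := by
      simpa using
        sum_powerset_sum_image_eq (fun _ : Fin m → ι => (1 : ℕ)) s
    rw [← finsetSum_coeff, sum_powerset_sum_image_eq, coeff_sum_piFinset_prod_ascPochhammer,
      ← mul_sum, hcount]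
  have hsurj (l : ℕ) (f : Fin l → ι) : univ.image f = univ ↔ f.Surjective := by
    simp [eq_univ_iff_forall, Function.Surjective]
  simpa only [hsurj] using himage univ

end Surjections

section OrderedSetPartitions

instance (n k : ℕ) : DecidablePred (IsOrderedSetPartition n k) := fun _ =>
  inferInstanceAs (Decidable (_ ∧ _))

instance (n : ℕ) : DecidablePred (IsPartitionOf n) := fun _ =>
  inferInstanceAs (Decidable (_ ∧ _))

theorem sum_isOrderedSetPartition {M : Type*} [AddCommMonoid M] (n k : ℕ)
    (F : (Fin k → Finset (Fin n)) → M) :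
    ∑ B with IsOrderedSetPartition n k B, F B =
      ∑ f : Fin n → Fin k with f.Surjective, F (fiber f) := by
  symm
  refine sum_nbij fiber (fun f hf => ?_) (fun f _ g _ h => ?_) (fun B hB => ?_) fun _ _ => rfl
  · have hf : f.Surjective := by simpa using hf
    refine mem_filter_univ _ |>.2 ⟨fun i => ?_, fun i j hij => ?_, fun x => ⟨f x, by simp⟩⟩
    · obtain ⟨x, hx⟩ := hf i
      exact ⟨x, mem_fiber.2 hx⟩
    · exact disjoint_left.2 fun x hi hj => hij ((mem_fiber.1 hi).symm.trans (mem_fiber.1 hj))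
  · funext x
    have hx : x ∈ fiber g (f x) := h ▸ mem_fiber.2 rfl
    exact (mem_fiber.1 hx).symm
  · obtain ⟨hne, hdisj, hcover⟩ : IsOrderedSetPartition n k B := by simpa using hB
    choose f hf using hcover
    have hfiber : fiber f = B := by
      ext i x
      rw [mem_fiber]
      refine ⟨fun h => h ▸ hf x, fun hx => ?_⟩
      by_contra hfx
      exact disjoint_left.1 (hdisj _ _ hfx) (hf x) hx
    have hsurj : f.Surjective := fun i => by
      obtain ⟨x, hx⟩ := hne i
      exact ⟨x, by rwa [← hfiber, mem_fiber] at hx⟩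
    exact ⟨f, by simpa using hsurj, hfiber⟩

theorem isOrderedSetPartition_iff_isPartitionOf_image {n k : ℕ} {B : Fin k → Finset (Fin n)} :
    IsOrderedSetPartition n k B ↔ IsPartitionOf n (univ.image B) ∧ #(univ.image B) = k := by
  have hcard : #(univ.image B) = k ↔ B.Injective := by
    simpa [Set.injOn_univ] using card_image_iff (s := univ) (f := B)
  rw [hcard]
  constructor
  · rintro ⟨hne, hdisj, hcover⟩
    have hinj : B.Injective := fun i j hij => by
      by_contra h
      exact (hne i).ne_empty (disjoint_self.1 (hij ▸ hdisj i j h))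
    refine ⟨⟨by simpa using hne, ?_, by simpa using hcover⟩, hinj⟩
    simpa using fun i j hij => hdisj i j (mt (congrArg B) hij)
  · rintro ⟨⟨hne, hdisj, hcover⟩, hinj⟩
    simp only [mem_image, mem_univ, true_and, forall_exists_index, forall_apply_eq_imp_iff,
      exists_exists_eq_and] at hne hdisj hcover
    exact ⟨hne, fun i j hij => hdisj i j (hinj.ne hij), hcover⟩

theorem card_filter_image_univ_eq {ι β : Type*} [Fintype ι] [DecidableEq ι] [Fintype β]
    [DecidableEq β] {s : Finset β} (hs : #s = Fintype.card ι) :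
    #{f : ι → β | univ.image f = s} = (#s).factorial := by
  have hcard : Fintype.card ι = Fintype.card s := by rw [Fintype.card_coe, hs]
  rw [hs, ← Fintype.card_equiv (Fintype.equivOfCardEq hcard), ← card_univ]
  symm
  refine card_nbij (fun e i => (e i : β)) (fun e _ => ?_) (fun e _ e' _ h => ?_) (fun f hf => ?_)
  · refine mem_filter_univ _ |>.2 (ext fun b => ?_)
    simp only [mem_image, mem_univ, true_and]
    exact ⟨fun ⟨i, hi⟩ => hi ▸ (e i).2, fun hb => ⟨e.symm ⟨b, hb⟩, by simp⟩⟩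
  · exact Equiv.ext fun i => Subtype.ext (congrFun h i)
  · have hf : univ.image f = s := by simpa using hf
    let g (i : ι) : s := ⟨f i, hf ▸ mem_image_of_mem f (mem_univ i)⟩
    have hg : g.Surjective := fun ⟨b, hb⟩ => by
      obtain ⟨i, -, rfl⟩ := mem_image.1 (hf ▸ hb)
      exact ⟨i, rfl⟩
    have hbij := (Fintype.bijective_iff_surjective_and_card g).2 ⟨hg, hcard⟩
    exact ⟨Equiv.ofBijective g hbij, mem_coe.2 (mem_univ _), rfl⟩

theorem card_isOrderedSetPartition (n k : ℕ) :
    #{B | IsOrderedSetPartition n k B} = stirlingSecond n k * k.factorial := by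
  have hsecond : stirlingSecond n k = #{P | IsPartitionOf n P ∧ #P = k} := by
    rw [stirlingSecond, ← Set.ncard_coe_finset]
    simp
  rw [hsecond, card_eq_sum_card_fiberwise (f := fun B => univ.image B)
    (t := {P | IsPartitionOf n P ∧ #P = k})
    (by simp [Set.MapsTo, isOrderedSetPartition_iff_isPartitionOf_image])]
  refine sum_const_nat fun P hP => ?_
  obtain ⟨hpart, hcard⟩ := (mem_filter_univ P).1 hP
  have henum : #{B : Fin k → Finset (Fin n) | univ.image B = P} = k.factorial := by
    rw [card_filter_image_univ_eq (by simpa using hcard), hcard]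
  rw [filter_filter, ← henum]
  refine congrArg card (filter_congr fun B _ => ?_)
  simp only [isOrderedSetPartition_iff_isPartitionOf_image, and_iff_right_iff_imp]
  rintro rfl
  exact ⟨hpart, hcard⟩

theorem card_surjective (n k : ℕ) :
    #{f : Fin n → Fin k | f.Surjective} = stirlingSecond n k * k.factorial := by
  rw [← card_isOrderedSetPartition, card_eq_sum_ones, card_eq_sum_ones, sum_isOrderedSetPartition]

end OrderedSetPartitions

section Lists

open Polynomial

variable {α : Type*}

/-- The number of right-to-left minima of a list: the positions such that no later entry is
smaller than the entry at that position. These are the positions not counted by `nseList`. -/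
def rlMinima [LinearOrder α] : List α → ℕ
  | [] => 0
  | a :: w => (if ∃ b ∈ w, b < a then 0 else 1) + rlMinima w

theorem nseList_add_rlMinima [LinearOrder α] (w : List α) :
    nseList w + rlMinima w = w.length := by
  induction w with
  | nil => rfl
  | cons a w ih =>
    rw [nseList, rlMinima, List.length_cons]
    split_ifs <;> lia

/-- The orderings of `s`: the lists in which each element of `s`, and nothing else, occurs exactly
once. -/
def orderings [DecidableEq α] (s : Finset α) : Finset (List α) :=
  ⟨s.1.lists, Multiset.lists_nodup_finset s⟩

theorem mem_orderings [DecidableEq α] {s : Finset α} {w : List α} :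
    w ∈ orderings s ↔ w.Nodup ∧ w.toFinset = s := by
  rw [orderings, mem_mk, Multiset.mem_lists_iff]
  constructor
  · intro h
    have h : s.1 = (w : Multiset α) := h
    have hw : w.Nodup := Multiset.coe_nodup.1 (h ▸ s.2)
    exact ⟨hw, val_injective (by rw [h, List.toFinset_val, hw.dedup])⟩
  · rintro ⟨hw, rfl⟩
    rw [List.toFinset_val, hw.dedup]
    rfl

theorem sum_orderings_of_nonempty [DecidableEq α] {M : Type*} [AddCommMonoid M] {s : Finset α}
    (hs : s.Nonempty) (F : List α → M) :
    ∑ w ∈ orderings s, F w = ∑ a ∈ s, ∑ w ∈ orderings (s.erase a), F (a :: w) := by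
  rw [sum_sigma']
  symm
  refine sum_nbij (fun p => p.1 :: p.2) ?_ ?_ ?_ fun _ _ => rfl
  · rintro ⟨a, w⟩ h
    obtain ⟨ha, hw, hws⟩ : a ∈ s ∧ w.Nodup ∧ w.toFinset = s.erase a := by
      simpa [mem_orderings] using h
    have haw : a ∉ w := by simp [← List.mem_toFinset, hws]
    exact mem_orderings.2 ⟨hw.cons haw, by rw [List.toFinset_cons, hws, insert_erase ha]⟩
  · rintro ⟨a, w⟩ _ ⟨b, v⟩ _ h
    obtain ⟨rfl, rfl⟩ := List.cons.inj h
    rfl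
  · intro w hw
    obtain ⟨hnodup, rfl⟩ := mem_orderings.1 hw
    obtain ⟨a, w, rfl⟩ := List.exists_cons_of_ne_nil (List.toFinset_nonempty_iff _ |>.1 hs)
    obtain ⟨ha, hnodup⟩ := List.nodup_cons.1 hnodup
    refine ⟨⟨a, w⟩, ?_, rfl⟩
    simp [mem_orderings, hnodup, ha]

-- Choose the first entry: it is a right-to-left minimum exactly when it is the minimum of `s`.
theorem sum_orderings_X_pow_rlMinima [LinearOrder α] (s : Finset α) :
    ∑ w ∈ orderings s, (X : ℕ[X]) ^ rlMinima w = ascPochhammer ℕ #s := by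
  induction hm : #s generalizing s with
  | zero =>
    obtain rfl := card_eq_zero.1 hm
    have hnil : orderings (∅ : Finset α) = {[]} := by
      ext w
      simp +contextual [mem_orderings, List.toFinset_eq_empty_iff]
    simp [hnil, rlMinima]
  | succ m ih =>
    have hs : s.Nonempty := card_pos.1 (by lia)
    have hmin : s.min' hs ∈ s := s.min'_mem hs
    have hfirst (a : α) (ha : a ∈ s) (w : List α) (hw : w ∈ orderings (s.erase a)) :
        (∃ b ∈ w, b < a) ↔ a ≠ s.min' hs := by
      have hmem (b : α) : b ∈ w ↔ b ≠ a ∧ b ∈ s := by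
        rw [← List.mem_toFinset, (mem_orderings.1 hw).2, mem_erase]
      constructor
      · rintro ⟨b, hb, hba⟩ rfl
        exact (s.min'_le b ((hmem b).1 hb).2).not_gt hba
      · exact fun h => ⟨s.min' hs, (hmem _).2 ⟨h.symm, hmin⟩, (s.min'_le a ha).lt_of_ne h.symm⟩
    have hinner (a : α) (ha : a ∈ s) : ∑ w ∈ orderings (s.erase a), (X : ℕ[X]) ^ rlMinima (a :: w) =
        ascPochhammer ℕ m * if a = s.min' hs then X else 1 := by
      rw [← ih (s.erase a) (by rw [card_erase_of_mem ha, hm, Nat.add_sub_cancel]), sum_mul]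
      refine sum_congr rfl fun w hw => ?_
      simp only [rlMinima, hfirst a ha w hw]
      split_ifs <;> simp_all [pow_add, mul_comm]
    have herase : ∑ a ∈ s.erase (s.min' hs), (if a = s.min' hs then X else 1 : ℕ[X]) = m := by
      rw [sum_congr rfl fun a ha => if_neg (ne_of_mem_erase ha)]
      simp [card_erase_of_mem hmin, hm]
    rw [sum_orderings_of_nonempty hs, sum_congr rfl hinner, ← mul_sum, ascPochhammer_succ_right,
      ← add_sum_erase s _ hmin, if_pos rfl, herase]

end Lists

section ListsOfLists

open Polynomial

variable {n k : ℕ}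

theorem isListOfLists_iff {L : Fin k → List (Fin n)} :
    IsListOfLists n k L ↔
      (∀ i, (L i).Nodup) ∧ IsOrderedSetPartition n k fun i => (L i).toFinset := by
  simp only [IsListOfLists, IsOrderedSetPartition, List.toFinset_nonempty_iff, List.mem_toFinset,
    disjoint_left]
  tauto

theorem nseLL_add_sum_rlMinima {L : Fin k → List (Fin n)} (hL : IsListOfLists n k L) :
    nseLL L + ∑ i, rlMinima (L i) = n := by
  obtain ⟨hnodup, -, hdisj, hcover⟩ := isListOfLists_iff.1 hL
  calc nseLL L + ∑ i, rlMinima (L i)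
      = ∑ i, #(L i).toFinset := by
        simp only [nseLL, ← sum_add_distrib, nseList_add_rlMinima,
          List.toFinset_card_of_nodup (hnodup _)]
    _ = #(univ.biUnion fun i => (L i).toFinset) :=
        (card_biUnion fun i _ j _ hij => hdisj i j hij).symm
    _ = #(univ : Finset (Fin n)) := by
        congr 1
        ext x
        simpa using hcover x
    _ = n := card_fin n

/-- The finset of all lists of lists on `[n]` with `k` blocks, grouped by the underlying ordered
set partition. -/
def listsOfLists (n k : ℕ) : Finset (Fin k → List (Fin n)) :=
  ({B | IsOrderedSetPartition n k B} : Finset _).biUnion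
    fun B => Fintype.piFinset fun i => orderings (B i)

theorem mem_listsOfLists {L : Fin k → List (Fin n)} :
    L ∈ listsOfLists n k ↔ IsListOfLists n k L := by
  simp only [listsOfLists, mem_biUnion, mem_filter_univ, Fintype.mem_piFinset, mem_orderings,
    isListOfLists_iff, forall_and, ← funext_iff]
  exact ⟨fun ⟨_, hB, hL, hLB⟩ => ⟨hL, hLB ▸ hB⟩, fun ⟨hL, hB⟩ => ⟨_, hB, hL, rfl⟩⟩

theorem sum_listsOfLists_X_pow (n k : ℕ) :
    ∑ L ∈ listsOfLists n k, (X : ℕ[X]) ^ ∑ i, rlMinima (L i) =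
      ∑ B with IsOrderedSetPartition n k B, ∏ i, ascPochhammer ℕ #(B i) := by
  rw [listsOfLists, sum_biUnion]
  · simp only [← prod_pow_eq_pow_sum, ← sum_orderings_X_pow_rlMinima, prod_univ_sum]
  · intro B _ C _ hBC
    refine disjoint_left.2 fun L hB hC => hBC (funext fun i => ?_)
    rw [← (mem_orderings.1 (Fintype.mem_piFinset.1 hB i)).2,
      (mem_orderings.1 (Fintype.mem_piFinset.1 hC i)).2]

theorem llpNseCount_eq_coeff {j : ℕ} (hj : j ≤ n) :
    llpNseCount n k j =
      (∑ L ∈ listsOfLists n k, (X : ℕ[X]) ^ ∑ i, rlMinima (L i)).coeff (n - j) := by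
  rw [coeff_sum_X_pow, llpNseCount, Nat.cast_id, ← Set.ncard_coe_finset]
  congr 1
  ext L
  simp only [coe_filter, mem_listsOfLists, Set.mem_ofPred_eq]
  refine and_congr_right fun hL => ?_
  have := nseLL_add_sum_rlMinima hL
  lia

end ListsOfLists

/-- For `n ≥ 1` and `0 ≤ j ≤ n-1`, the number of ordered partitions of
`[n]` into `k` nonempty lists with `nse = j`, summed over `1 ≤ k ≤ n-j`, equals
`∑_{k=1}^{n-j} c(n,n-j) S(n-j,k) k!`; indeed for each such `k` the marginal count
is `c(n,n-j) S(n-j,k) k!`. -/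
theorem list_of_lists_nse_marginal (n j : ℕ) (hn : 1 ≤ n) (hj : j ≤ n - 1) :
    (∑ k ∈ Finset.Icc 1 (n - j), llpNseCount n k j) =
        ∑ k ∈ Finset.Icc 1 (n - j),
          stirlingFirst n (n - j) * stirlingSecond (n - j) k * Nat.factorial k ∧
      ∀ k, 1 ≤ k → k ≤ n - j →
        llpNseCount n k j =
          stirlingFirst n (n - j) * stirlingSecond (n - j) k * Nat.factorial k := by
  have hmarginal (k : ℕ) : llpNseCount n k j =
      stirlingFirst n (n - j) * stirlingSecond (n - j) k * Nat.factorial k := by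
    rw [llpNseCount_eq_coeff (by lia), sum_listsOfLists_X_pow, sum_isOrderedSetPartition,
      coeff_sum_surjective_prod_ascPochhammer, ← stirlingFirst_eq_coeff_ascPochhammer,
      card_surjective, mul_assoc]
  exact ⟨sum_congr rfl fun k _ => hmarginal k, fun k _ _ => hmarginal k⟩
end
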